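/- arXiv:2112.11149 — 2 statements merged into one kernel-verified Lean document; each statement's English description precedes it below -/
import Mathlib

section
/- For a compact set K ⊆ M(X) let G(K) = {x ∈ X : V(x) ⊆ K}. Then the set O of observable measures satisfies O = ⋂{K ⊆ M(X) : K weak*-compact and Leb(G(K)) = 1}; that is, O is the smallest weak*-compact subset of M(X) containing, for Leb-a.e. x, all weak* limit points of the empirical measures of x. In particular O is nonempty, weak*-compact, contained in M(X,T), and Leb(G(O)) = 1. -/
open MeasureTheory Filter Topology
open scoped ENNReal

/-- The empirical probability measure `γ_{n+1,x} = (1/(n+1)) ∑_{j≤n} δ_{T^j x}` of the orbit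
of `x` (indexed so that it is a probability measure for every index). -/
noncomputable def empiricalPM {X : Type*} [MeasurableSpace X] (T : X → X) (x : X) (n : ℕ) :
    MeasureTheory.ProbabilityMeasure X :=
  ⟨(n + 1 : ℝ≥0∞)⁻¹ • ∑ j ∈ Finset.range (n + 1), MeasureTheory.Measure.dirac (T^[j] x), by
    constructor
    rw [Measure.smul_apply, Measure.finset_sum_apply]
    simp
    rw [ENNReal.inv_mul_cancel] <;> simp⟩

/-- The set `V(x)` of weak* limit points of the sequence of empirical measures of `x`. -/
def limitSet {X : Type*} [MeasurableSpace X] [TopologicalSpace X] [OpensMeasurableSpace X]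
    (T : X → X) (x : X) : Set (MeasureTheory.ProbabilityMeasure X) :=
  {μ | ∃ φ : ℕ → ℕ, StrictMono φ ∧ Tendsto (fun j => empiricalPM T x (φ j)) atTop (𝓝 μ)}

/-- `μ` is an observable (physical-like) measure for `(X, T, Leb)`: every weak* neighbourhood
`U` of `μ` (equivalently, every ε-ball around `μ` in a compatible metric) is intersected by
`V(x)` for a positive `Leb`-measure set of points `x`. -/
def IsObservable {X : Type*} [MeasurableSpace X] [TopologicalSpace X] [OpensMeasurableSpace X]
    (Leb : MeasureTheory.Measure X) (T : X → X) (μ : MeasureTheory.ProbabilityMeasure X) : Prop :=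
  ∀ U : Set (MeasureTheory.ProbabilityMeasure X), IsOpen U → μ ∈ U →
    0 < Leb {x | (limitSet T x ∩ U).Nonempty}

/-- The Lyapunov exponent `χ(μ, Φ) = lim_n (1/n) ∫ log φ_n dμ` of a potential
`Φ = {log φ_n}` (for invariant `μ` the limit exists by subadditivity, so it equals the
`liminf` used here); it takes values in `[-∞, ∞)`, i.e. in `EReal`. -/
noncomputable def lyapExp {X : Type*} [MeasurableSpace X] (φ : ℕ → X → ℝ)
    (μ : MeasureTheory.Measure X) : EReal :=
  liminf (fun n : ℕ => (((n : ℝ)⁻¹ * ∫ x, Real.log (φ n x) ∂μ : ℝ) : EReal)) atTop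

open BoundedContinuousFunction in
lemma integral_empiricalPM {X : Type*} [MeasurableSpace X] [TopologicalSpace X]
    [OpensMeasurableSpace X] (T : X → X) (x : X) (n : ℕ) (f : X →ᵇ ℝ) :
    ∫ y, f y ∂(empiricalPM T x n : Measure X) = birkhoffAverage ℝ T f (n + 1) x := by
  have hf : StronglyMeasurable f := f.continuous.measurable.stronglyMeasurable
  have h : (empiricalPM T x n : Measure X) =
      (n + 1 : ℝ≥0∞)⁻¹ • ∑ j ∈ Finset.range (n + 1), Measure.dirac (T^[j] x) := rfl
  rw [h, integral_smul_measure, integral_finsetSum_measure]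
  · simp only [integral_dirac' _ _ hf, birkhoffAverage, birkhoffSum]
    congr 1
    rw [ENNReal.toReal_inv]
    norm_cast
  · exact fun j _ => f.integrable _

section

variable {X : Type*} [MeasurableSpace X]

lemma continuous_empiricalPM [TopologicalSpace X] [OpensMeasurableSpace X] {T : X → X}
    (hT : Continuous T) (n : ℕ) : Continuous fun x => empiricalPM T x n := by
  rw [ProbabilityMeasure.continuous_iff_forall_continuous_integral]
  intro f
  simp only [integral_empiricalPM, birkhoffAverage, birkhoffSum]
  exact (continuous_finsetSum _ fun j _ => f.continuous.comp (hT.iterate j)).const_smul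
    (((n + 1 : ℕ) : ℝ)⁻¹)

lemma isClosed_setOf_isObservable [TopologicalSpace X] [OpensMeasurableSpace X]
    (Leb : Measure X) (T : X → X) :
    IsClosed {μ | IsObservable Leb T μ} := by
  refine ⟨isOpen_iff_forall_mem_open.mpr fun μ hμ => ?_⟩
  simp only [IsObservable, Set.mem_compl_iff, Set.mem_ofPred_eq, not_forall] at hμ
  obtain ⟨U, hU, hμU, h⟩ := hμ
  exact ⟨U, fun ν hνU hν => h (hν U hU hνU), hU, hμU⟩

/-- Every weak* limit point of the empirical measures of a continuous map is invariant. -/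
lemma map_eq_of_mem_limitSet [TopologicalSpace X] [HasOuterApproxClosed X] [BorelSpace X]
    {T : X → X} (hT : Continuous T) {x : X} {μ : ProbabilityMeasure X} (hμ : μ ∈ limitSet T x) :
    (μ : Measure X).map T = μ := by
  obtain ⟨φ, hφ, hlim⟩ := hμ
  have : IsProbabilityMeasure ((μ : Measure X).map T) :=
    Measure.isProbabilityMeasure_map hT.measurable.aemeasurable
  refine ext_of_forall_integral_eq_of_IsFiniteMeasure fun f => ?_
  rw [integral_map hT.measurable.aemeasurable f.continuous.aestronglyMeasurable]
  rw [ProbabilityMeasure.tendsto_iff_forall_integral_tendsto] at hlim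
  have h₁ := hlim f
  have h₂ := hlim (f.compContinuous ⟨T, hT⟩)
  have h₃ := (tendsto_birkhoffAverage_apply_sub_birkhoffAverage' ℝ f.isBounded_range T x).comp
    ((tendsto_add_atTop_nat 1).comp hφ.tendsto_atTop)
  simp only [integral_empiricalPM] at h₁ h₂
  refine sub_eq_zero.mp (tendsto_nhds_unique (h₂.sub h₁) (h₃.congr fun j => ?_))
  have hcomm (k : ℕ) : T (T^[k] x) = T^[k] (T x) :=
    (Function.iterate_succ_apply' T k x).symm.trans (Function.iterate_succ_apply T k x)
  simp [birkhoffAverage, birkhoffSum, hcomm]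

end

section

variable {X : Type*} [MetricSpace X] [CompactSpace X] [MeasurableSpace X] [BorelSpace X]

lemma secondCountableTopology_probabilityMeasure :
    SecondCountableTopology (ProbabilityMeasure X) := by
  let := TopologicalSpace.metrizableSpaceMetric (ProbabilityMeasure X)
  infer_instance

lemma mem_limitSet_iff_mapClusterPt {T : X → X} {x : X} {μ : ProbabilityMeasure X} :
    μ ∈ limitSet T x ↔ MapClusterPt μ atTop (empiricalPM T x) :=
  ⟨fun ⟨_, hφ, h⟩ => .of_comp hφ.tendsto_atTop h.mapClusterPt,
    fun h => h.tendsto_subseq⟩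

lemma limitSet_nonempty (T : X → X) (x : X) : (limitSet T x).Nonempty := by
  obtain ⟨μ, -, h⟩ := isCompact_univ.exists_mapClusterPt (f := atTop) (u := empiricalPM T x)
    (by simp)
  exact ⟨μ, mem_limitSet_iff_mapClusterPt.mpr h⟩

lemma measurableSet_limitSet_inter_nonempty {T : X → X} (hT : Continuous T)
    {U : Set (ProbabilityMeasure X)} (hU : IsOpen U) :
    MeasurableSet {x | (limitSet T x ∩ U).Nonempty} := by
  have := secondCountableTopology_probabilityMeasure (X := X)
  let b := TopologicalSpace.countableBasis (ProbabilityMeasure X)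
  have hb : TopologicalSpace.IsTopologicalBasis b :=
    TopologicalSpace.isBasis_countableBasis _
  have key : {x | (limitSet T x ∩ U).Nonempty} =
      ⋃ B ∈ {B ∈ b | closure B ⊆ U}, ⋂ N : ℕ, ⋃ n ≥ N, {x | empiricalPM T x n ∈ B} := by
    ext x
    simp only [Set.mem_iUnion, Set.mem_iInter, Set.mem_ofPred_eq, exists_prop]
    constructor
    · rintro ⟨μ, hμ, hμU⟩
      obtain ⟨B, hB, hμB, hBU⟩ := hb.exists_closure_subset (hU.mem_nhds hμU)
      exact ⟨B, ⟨hB, hBU⟩, frequently_atTop.mp <|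
        (mem_limitSet_iff_mapClusterPt.mp hμ).frequently ((hb.isOpen hB).mem_nhds hμB)⟩
    · rintro ⟨B, ⟨-, hBU⟩, h⟩
      obtain ⟨μ, hμB, hμ⟩ := (isClosed_closure (s := B)).isCompact.exists_mapClusterPt_of_frequently
        ((frequently_atTop.mpr h).mono fun _ h => subset_closure h)
      exact ⟨μ, mem_limitSet_iff_mapClusterPt.mpr hμ, hBU hμB⟩
  rw [key]
  refine .biUnion ((TopologicalSpace.countable_countableBasis _).mono (Set.sep_subset _ _))
    fun B hB => .iInter fun N => .iUnion fun n => .iUnion fun _ => ?_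
  exact ((hb.isOpen hB.1).preimage (continuous_empiricalPM hT n)).measurableSet

/-- Almost every point has only observable limit measures. -/
lemma ae_limitSet_subset_isObservable (Leb : Measure X) (T : X → X) :
    ∀ᵐ x ∂Leb, limitSet T x ⊆ {μ | IsObservable Leb T μ} := by
  have := secondCountableTopology_probabilityMeasure (X := X)
  let S := {U : Set (ProbabilityMeasure X) |
    IsOpen U ∧ Leb {x | (limitSet T x ∩ U).Nonempty} = 0}
  obtain ⟨C, hC, hCS, hCU⟩ := TopologicalSpace.isOpen_sUnion_countable S fun U hU => hU.1
  have hae : ∀ᵐ x ∂Leb, ∀ U ∈ C, ¬ (limitSet T x ∩ U).Nonempty :=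
    (ae_ball_iff hC).mpr fun U hU => by
      simpa only [ae_iff, not_not] using (hCS hU).2
  filter_upwards [hae] with x hx μ hμ
  by_contra hobs
  simp only [IsObservable, Set.mem_ofPred_eq, not_forall, not_lt, nonpos_iff_eq_zero] at hobs
  obtain ⟨U, hU, hμU, h⟩ := hobs
  obtain ⟨W, hW, hμW⟩ := hCU.symm ▸ Set.mem_sUnion_of_mem hμU (show U ∈ S from ⟨hU, h⟩)
  exact hx W hW ⟨μ, hμ, hμW⟩

/-- A closed set containing almost every limit set contains all observable measures. -/
lemma isObservable_subset_of_isClosed {Leb : Measure X} [IsProbabilityMeasure Leb] {T : X → X}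
    (hT : Continuous T) {K : Set (ProbabilityMeasure X)} (hK : IsClosed K)
    (h : Leb {x | limitSet T x ⊆ K} = 1) : {μ | IsObservable Leb T μ} ⊆ K := by
  intro μ hμ
  by_contra hμK
  have hset : {x | (limitSet T x ∩ Kᶜ).Nonempty} = {x | limitSet T x ⊆ K}ᶜ := by
    ext x
    simp [Set.inter_compl_nonempty_iff]
  have hmeas := measurableSet_limitSet_inter_nonempty hT hK.isOpen_compl
  rw [hset] at hmeas
  have hpos := hμ Kᶜ hK.isOpen_compl hμK
  rw [hset, (prob_compl_eq_zero_iff hmeas.of_compl).mpr h] at hpos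
  exact hpos.false

end

/-- **Theorem 2.2 ([CE11, Theorem 1.5]).** The set `O` of observable measures is the smallest
weak*-compact subset of `M(X)` containing, for `Leb`-a.e. `x`, all weak* limit points of the
empirical measures of `x`: with `G(K) = {x : V(x) ⊆ K}` one has
`O = ⋂ {K : K compact, Leb(G(K)) = 1}`. In particular `O` is nonempty, weak*-compact,
contained in `M(X,T)`, and `Leb(G(O)) = 1`. -/
theorem observable_eq_sInter_compact_full_basin
    {X : Type*} [MetricSpace X] [CompactSpace X] [MeasurableSpace X] [BorelSpace X]
    (T : X → X) (hT : IsHomeomorph T)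
    (Leb : MeasureTheory.Measure X) [IsProbabilityMeasure Leb] :
    {μ : ProbabilityMeasure X | IsObservable Leb T μ} =
        ⋂₀ {K : Set (ProbabilityMeasure X) |
          IsCompact K ∧ Leb {x | limitSet T x ⊆ K} = 1} ∧
      {μ : ProbabilityMeasure X | IsObservable Leb T μ}.Nonempty ∧
      IsCompact {μ : ProbabilityMeasure X | IsObservable Leb T μ} ∧
      {μ : ProbabilityMeasure X | IsObservable Leb T μ} ⊆
        {μ : ProbabilityMeasure X | (μ : Measure X).map T = (μ : Measure X)} ∧
      Leb {x | limitSet T x ⊆ {μ : ProbabilityMeasure X | IsObservable Leb T μ}} = 1 := by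
  have hae := ae_limitSet_subset_isObservable Leb T
  have hfull : Leb {x | limitSet T x ⊆ {μ | IsObservable Leb T μ}} = 1 := by
    rw [measure_eq_measure_of_null_sdiff (Set.subset_univ _)
      (by simpa [ae_iff, ← Set.compl_eq_univ_sdiff, Set.compl_def] using hae), measure_univ]
  have hcomp := (isClosed_setOf_isObservable Leb T).isCompact
  refine ⟨?_, ?_, hcomp, ?_, hfull⟩
  · exact Set.Subset.antisymm
      (Set.subset_sInter fun K hK =>
        isObservable_subset_of_isClosed hT.continuous hK.1.isClosed hK.2)
      (Set.sInter_subset_of_mem ⟨hcomp, hfull⟩)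
  · obtain ⟨x, hx⟩ := hae.exists
    exact (limitSet_nonempty T x).mono hx
  · have hclosed : IsClosed {μ : ProbabilityMeasure X | (μ : Measure X).map T = μ} := by
      have heq : {μ : ProbabilityMeasure X | (μ : Measure X).map T = μ} =
          {μ | μ.map hT.continuous.measurable.aemeasurable = μ} := by
        ext μ
        simp [← ProbabilityMeasure.toMeasure_injective.eq_iff]
      rw [heq]
      exact isClosed_eq (ProbabilityMeasure.continuous_map hT.continuous) continuous_id
    refine isObservable_subset_of_isClosed hT.continuous hclosed ?_
    convert! measure_univ (μ := Leb)
    exact Set.eq_univ_of_forall fun x μ hμ => map_eq_of_mem_limitSet hT.continuous hμ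
end

section
/- Let Φ = {log φ_n}_{n≥1} be a subadditive potential over (X,T) and β(Φ) := sup{χ(μ,Φ) : μ ∈ M(X,T)}. Then β(Φ) = limsup_{n→∞} (1/n)·sup_{x∈X} log φ_n(x) = sup_{x∈X} limsup_{n→∞} (1/n)·log φ_n(x). -/
open MeasureTheory Filter Topology
open scoped ENNReal

/-- If a continuous subadditive sequence takes a negative value at some positive time at every
point of a compact space, then it is uniformly bounded above. -/
theorem exists_forall_le_of_subadditive {X : Type*} [TopologicalSpace X] [CompactSpace X]
    {T : X → X} {f : ℕ → X → ℝ} (hf : ∀ n, Continuous (f n))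
    (hsub : ∀ m n x, f (m + n) x ≤ f m x + f n (T^[m] x))
    (hneg : ∀ x, ∃ n, 1 ≤ n ∧ f n x < 0) : ∃ C : ℝ, ∀ n x, f n x ≤ C := by
  choose p hp1 hp using hneg
  obtain ⟨t, ht⟩ := isCompact_univ.elim_finite_subcover (fun x => {y | f (p x) y < 0})
    (fun x => isOpen_lt (hf _) continuous_const) (fun x _ => Set.mem_iUnion.2 ⟨x, hp x⟩)
  have hbdd : ∀ k, ∃ C : ℝ, ∀ x, f k x ≤ C := fun k => by
    obtain ⟨C, hC⟩ := (isCompact_range (hf k)).bddAbove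
    exact ⟨C, fun x => hC ⟨x, rfl⟩⟩
  choose B hB using hbdd
  obtain ⟨C, hC⟩ := ((Finset.range (t.sup p)).image B).exists_le
  refine ⟨C, fun n => ?_⟩
  induction n using Nat.strong_induction_on with
  | _ n ih =>
    intro x
    by_cases hn : n < t.sup p
    · exact (hB n x).trans (hC _ (Finset.mem_image_of_mem B (Finset.mem_range.2 hn)))
    · obtain ⟨y, hyt, hy⟩ := Set.mem_iUnion₂.1 (ht (Set.mem_univ x))
      have hpn : p y ≤ n := (Finset.le_sup hyt).trans (not_lt.1 hn)
      have hstep := hsub (p y) (n - p y) x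
      rw [Nat.add_sub_cancel' hpn] at hstep
      have hrest := ih (n - p y) (by have := hp1 y; omega) (T^[p y] x)
      have hy' : f (p y) x < 0 := hy
      linarith

theorem integral_empiricalPM_s14 {X : Type*} [TopologicalSpace X] [CompactSpace X]
    [MeasurableSpace X] [BorelSpace X] (T : X → X) (x : X) (n : ℕ) {g : X → ℝ}
    (hg : Continuous g) :
    ∫ y, g y ∂(empiricalPM T x n : Measure X) =
      (n + 1 : ℝ)⁻¹ * ∑ j ∈ Finset.range (n + 1), g (T^[j] x) := by
  have hreal : ((n + 1 : ℝ≥0∞)⁻¹).toReal = (n + 1 : ℝ)⁻¹ := by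
    rw [ENNReal.toReal_inv]
    norm_cast
  change ∫ y, g y ∂((n + 1 : ℝ≥0∞)⁻¹ • ∑ j ∈ Finset.range (n + 1), Measure.dirac (T^[j] x)) = _
  rw [integral_smul_measure, hreal, integral_finsetSum_measure, smul_eq_mul]
  · simp only [integral_dirac' _ _ hg.measurable.stronglyMeasurable]
  · exact fun j _ => hg.integrable_of_hasCompactSupport (HasCompactSupport.of_compactSpace g)

/-- If a continuous subadditive sequence is nonnegative along all times at one point, then some
invariant probability measure gives all its terms nonnegative integrals. -/
theorem exists_invariant_integral_nonneg {X : Type*} [MetricSpace X] [CompactSpace X]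
    [MeasurableSpace X] [BorelSpace X] {T : X → X} (hT : Continuous T) {f : ℕ → X → ℝ}
    (hf : ∀ n, Continuous (f n)) (hsub : ∀ m n x, f (m + n) x ≤ f m x + f n (T^[m] x))
    {x : X} (hx : ∀ n, 0 ≤ f n x) :
    ∃ μ : ProbabilityMeasure X, (μ : Measure X).map T = (μ : Measure X) ∧
      ∀ n, 0 ≤ ∫ y, f n y ∂(μ : Measure X) := by
  let F : Ultrafilter ℕ := hyperfilter ℕ
  let μ : ProbabilityMeasure X := (F.map (empiricalPM T x)).lim
  have hμ : Tendsto (empiricalPM T x) F (𝓝 μ) := (F.map (empiricalPM T x)).le_nhds_lim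
  have hF : (F : Filter ℕ) ≤ atTop := Nat.hyperfilter_le_atTop
  have hint : ∀ g : X → ℝ, Continuous g →
      Tendsto (fun n : ℕ => (n + 1 : ℝ)⁻¹ * ∑ j ∈ Finset.range (n + 1), g (T^[j] x)) F
        (𝓝 (∫ y, g y ∂(μ : Measure X))) := fun g hg => by
    have h := ProbabilityMeasure.tendsto_iff_forall_integral_tendsto.1 hμ
      (BoundedContinuousFunction.mkOfCompact ⟨g, hg⟩)
    simpa only [BoundedContinuousFunction.mkOfCompact_apply, ContinuousMap.coe_mk,
      integral_empiricalPM_s14 T x _ hg] using h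
  have hinv : Tendsto (fun n : ℕ => (n + 1 : ℝ)⁻¹) F (𝓝 0) := by
    simpa only [one_div] using (tendsto_one_div_add_atTop_nhds_zero_nat (𝕜 := ℝ)).mono_left hF
  refine ⟨μ, ?_, fun m => ?_⟩
  · have : IsProbabilityMeasure ((μ : Measure X).map T) :=
      Measure.isProbabilityMeasure_map hT.aemeasurable
    refine ext_of_forall_integral_eq_of_IsFiniteMeasure fun g => ?_
    rw [integral_map hT.aemeasurable g.continuous.aestronglyMeasurable]
    have hdiff := (hint _ (g.continuous.comp hT)).sub (hint _ g.continuous)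
    have hzero : Tendsto (fun n : ℕ => (n + 1 : ℝ)⁻¹ * (g (T^[n + 1] x) - g x)) F (𝓝 0) := by
      refine squeeze_zero_norm (a := fun n : ℕ => (n + 1 : ℝ)⁻¹ * (‖g‖ + ‖g‖)) (fun n => ?_) ?_
      · rw [norm_mul, Real.norm_of_nonneg (by positivity)]
        gcongr
        exact (norm_sub_le _ _).trans (add_le_add (g.norm_coe_le_norm _) (g.norm_coe_le_norm _))
      · simpa using hinv.mul_const (‖g‖ + ‖g‖)
    refine sub_eq_zero.1 (tendsto_nhds_unique hdiff (hzero.congr fun n => ?_))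
    rw [← mul_sub, ← Finset.sum_sub_distrib]
    congr 1
    simp only [Function.comp_apply, ← Function.iterate_succ_apply']
    exact (Finset.sum_range_sub (fun j => g (T^[j] x)) (n + 1)).symm
  · have htel : ∀ N : ℕ, -∑ j ∈ Finset.range m, f j x ≤ ∑ j ∈ Finset.range N, f m (T^[j] x) := by
      intro N
      have hsum : ∑ j ∈ Finset.range (N + m), f j x - ∑ j ∈ Finset.range N, f j x ≤
          ∑ j ∈ Finset.range m, f j x + ∑ j ∈ Finset.range N, f m (T^[j] x) := by
        rw [add_comm N m, Finset.sum_range_add, add_sub_assoc, ← Finset.sum_sub_distrib]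
        gcongr with j
        have := hsub j m x
        rw [add_comm j m] at this
        linarith
      have hmono : ∑ j ∈ Finset.range N, f j x ≤ ∑ j ∈ Finset.range (N + m), f j x :=
        Finset.sum_le_sum_of_subset_of_nonneg (Finset.range_mono (by omega)) fun j _ _ => hx j
      linarith
    have hlow : Tendsto (fun n : ℕ => (n + 1 : ℝ)⁻¹ * -∑ j ∈ Finset.range m, f j x) F (𝓝 0) := by
      simpa using hinv.mul_const (-∑ j ∈ Finset.range m, f j x)
    exact le_of_tendsto_of_tendsto' hlow (hint _ (hf m)) fun n => by
      gcongr
      exact htel (n + 1)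

/-- **Formula (4.2).** For a subadditive potential `Φ = {log φ_n}` over a continuous map `T`
of a compact metric space `X`, the maximal Lyapunov exponent
`β(Φ) = sup {χ(μ,Φ) : μ ∈ M(X,T)}` satisfies
`β(Φ) = limsup_n (1/n) sup_x log φ_n(x) = sup_x limsup_n (1/n) log φ_n(x)`. -/
theorem maximal_lyapunov_exponent_formula
    {X : Type*} [MetricSpace X] [CompactSpace X] [Nonempty X]
    [MeasurableSpace X] [BorelSpace X]
    (T : X → X) (hT : Continuous T)
    (φ : ℕ → X → ℝ)
    (hcont : ∀ n, 1 ≤ n → Continuous (φ n))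
    (hpos : ∀ n, 1 ≤ n → ∀ x, 0 < φ n x)
    (hsub : ∀ m n, 1 ≤ m → 1 ≤ n → ∀ x, φ (m + n) x ≤ φ m x * φ n (T^[m] x)) :
    sSup {c : EReal | ∃ ν : ProbabilityMeasure X,
          (ν : Measure X).map T = (ν : Measure X) ∧ c = lyapExp φ (ν : Measure X)} =
        limsup (fun n : ℕ =>
          (((n : ℝ)⁻¹ : ℝ) : EReal) * ⨆ x : X, (Real.log (φ n x) : EReal)) atTop ∧
      sSup {c : EReal | ∃ ν : ProbabilityMeasure X,
          (ν : Measure X).map T = (ν : Measure X) ∧ c = lyapExp φ (ν : Measure X)} =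
        ⨆ x : X, limsup (fun n : ℕ =>
          (((n : ℝ)⁻¹ * Real.log (φ n x) : ℝ) : EReal)) atTop := by
  have hlogcont : ∀ n, 1 ≤ n → Continuous fun x => Real.log (φ n x) := fun n hn =>
    (hcont n hn).log fun x => (hpos n hn x).ne'
  have hlogsub : ∀ m n, 1 ≤ m → 1 ≤ n → ∀ x,
      Real.log (φ (m + n) x) ≤ Real.log (φ m x) + Real.log (φ n (T^[m] x)) := by
    intro m n hm hn x
    rw [← Real.log_mul (hpos m hm x).ne' (hpos n hn _).ne']
    exact Real.log_le_log (hpos _ (by omega) x) (hsub m n hm hn x)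
  have hsup : ∀ n : ℕ, 1 ≤ n → ∀ c : ℝ, (∀ x, (n : ℝ)⁻¹ * Real.log (φ n x) ≤ c) →
      (((n : ℝ)⁻¹ : ℝ) : EReal) * ⨆ x : X, (Real.log (φ n x) : EReal) ≤ c := by
    intro n hn c h
    have hn0 : (0 : ℝ) < n := by exact_mod_cast hn
    have hle : ⨆ x : X, (Real.log (φ n x) : EReal) ≤ ((n * c : ℝ) : EReal) :=
      iSup_le fun x => EReal.coe_le_coe_iff.2 ((inv_mul_le_iff₀ hn0).1 (h x))
    calc _ ≤ (((n : ℝ)⁻¹ : ℝ) : EReal) * ((n * c : ℝ) : EReal) :=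
          mul_le_mul_of_nonneg_left hle (EReal.coe_nonneg.2 (by positivity))
      _ = c := by rw [← EReal.coe_mul, inv_mul_cancel_left₀ hn0.ne']
  have hmax : ∀ n : ℕ, 1 ≤ n → ∃ z, (∀ x, Real.log (φ n x) ≤ Real.log (φ n z)) ∧
      (((n : ℝ)⁻¹ * Real.log (φ n z) : ℝ) : EReal) ≤
        (((n : ℝ)⁻¹ : ℝ) : EReal) * ⨆ x : X, (Real.log (φ n x) : EReal) := by
    intro n hn
    obtain ⟨z, -, hz⟩ := isCompact_univ.exists_isMaxOn Set.univ_nonempty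
      (hlogcont n hn).continuousOn
    refine ⟨z, fun x => hz (Set.mem_univ x), ?_⟩
    rw [EReal.coe_mul]
    exact mul_le_mul_of_nonneg_left (le_iSup (fun x : X => (Real.log (φ n x) : EReal)) z)
      (EReal.coe_nonneg.2 (by positivity))
  have hpoint : ∀ c : ℝ, (c : EReal) < limsup (fun n : ℕ =>
      (((n : ℝ)⁻¹ : ℝ) : EReal) * ⨆ x : X, (Real.log (φ n x) : EReal)) atTop →
      (∃ ν : ProbabilityMeasure X, (ν : Measure X).map T = (ν : Measure X) ∧
        (c : EReal) ≤ lyapExp φ (ν : Measure X)) ∧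
      ∃ x : X, (c : EReal) ≤ limsup (fun n : ℕ =>
        (((n : ℝ)⁻¹ * Real.log (φ n x) : ℝ) : EReal)) atTop := by
    intro c hc
    let f : ℕ → X → ℝ := fun n x => if n = 0 then 0 else Real.log (φ n x) - n * c
    have hfpos : ∀ n, 1 ≤ n → ∀ x, f n x = Real.log (φ n x) - n * c := fun n hn x =>
      if_neg (by omega)
    have hf : ∀ n, Continuous (f n) := by
      intro n
      rcases Nat.eq_zero_or_pos n with rfl | hn
      · simpa [f] using continuous_const
      · rw [funext (hfpos n hn)]
        exact (hlogcont n hn).sub continuous_const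
    have hfsub : ∀ m n x, f (m + n) x ≤ f m x + f n (T^[m] x) := by
      intro m n x
      rcases Nat.eq_zero_or_pos m with rfl | hm
      · simp [f]
      rcases Nat.eq_zero_or_pos n with rfl | hn
      · simp [f]
      rw [hfpos _ (by omega), hfpos m hm, hfpos n hn]
      have := hlogsub m n hm hn x
      push_cast
      linarith
    obtain ⟨x, hx⟩ : ∃ x, ∀ n, 1 ≤ n → 0 ≤ f n x := by
      by_contra! hneg
      obtain ⟨C, hC⟩ := exists_forall_le_of_subadditive hf hfsub hneg
      refine hc.not_ge (EReal.le_of_forall_lt_iff_le.1 fun b hb => ?_)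
      have hlim : Tendsto (fun n : ℕ => c + C * (n : ℝ)⁻¹) atTop (𝓝 c) := by
        simpa using (tendsto_inv_atTop_nhds_zero_nat (𝕜 := ℝ)).const_mul C |>.const_add c
      refine limsup_le_of_le (by isBoundedDefault) ?_
      filter_upwards [hlim.eventually (gt_mem_nhds (EReal.coe_lt_coe_iff.1 hb)),
        eventually_ge_atTop 1] with n hnb hn
      refine hsup n hn b fun y => ?_
      have hn0 : (0 : ℝ) < n := by exact_mod_cast hn
      have hy := hC n y
      rw [hfpos n hn] at hy
      calc (n : ℝ)⁻¹ * Real.log (φ n y) ≤ (n : ℝ)⁻¹ * (n * c + C) := by gcongr; linarith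
        _ = c + C * (n : ℝ)⁻¹ := by field_simp
        _ ≤ b := hnb.le
    refine ⟨?_, x, ?_⟩
    · obtain ⟨μ, hμ, hμf⟩ := exists_invariant_integral_nonneg hT hf hfsub (x := x) fun n => by
        rcases Nat.eq_zero_or_pos n with rfl | hn
        · simp [f]
        · exact hx n hn
      refine ⟨μ, hμ, le_liminf_of_le (by isBoundedDefault) ?_⟩
      filter_upwards [eventually_ge_atTop 1] with n hn
      have hn0 : (0 : ℝ) < n := by exact_mod_cast hn
      have h := hμf n
      simp only [hfpos n hn] at h
      rw [integral_sub ((hlogcont n hn).integrable_of_hasCompactSupport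
        (HasCompactSupport.of_compactSpace _)) (integrable_const _)] at h
      rw [EReal.coe_le_coe_iff, le_inv_mul_iff₀ hn0]
      simpa using h
    · refine le_trans (le_liminf_of_le (by isBoundedDefault) ?_) liminf_le_limsup
      filter_upwards [eventually_ge_atTop 1] with n hn
      have hn0 : (0 : ℝ) < n := by exact_mod_cast hn
      have h := hx n hn
      rw [hfpos n hn] at h
      rw [EReal.coe_le_coe_iff, le_inv_mul_iff₀ hn0]
      linarith
  have hmeasure : sSup {c : EReal | ∃ ν : ProbabilityMeasure X,
        (ν : Measure X).map T = (ν : Measure X) ∧ c = lyapExp φ (ν : Measure X)} =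
      limsup (fun n : ℕ =>
        (((n : ℝ)⁻¹ : ℝ) : EReal) * ⨆ x : X, (Real.log (φ n x) : EReal)) atTop := by
    refine le_antisymm (sSup_le ?_) (EReal.ge_of_forall_gt_iff_ge.1 fun c hc => ?_)
    · rintro _ ⟨ν, -, rfl⟩
      refine le_trans liminf_le_limsup (limsup_le_limsup ?_)
      filter_upwards [eventually_ge_atTop 1] with n hn
      obtain ⟨z, hz, hzle⟩ := hmax n hn
      refine le_trans (EReal.coe_le_coe_iff.2 ?_) hzle
      gcongr
      have h := integral_mono (μ := (ν : Measure X))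
        ((hlogcont n hn).integrable_of_hasCompactSupport (HasCompactSupport.of_compactSpace _))
        (integrable_const _) hz
      simpa using h
    · obtain ⟨ν, hν, hcν⟩ := (hpoint c hc).1
      exact hcν.trans (le_sSup ⟨ν, hν, rfl⟩)
  refine ⟨hmeasure, hmeasure.trans
    (le_antisymm (EReal.ge_of_forall_gt_iff_ge.1 fun c hc => ?_) (iSup_le fun x => ?_))⟩
  · obtain ⟨x, hx⟩ := (hpoint c hc).2
    exact hx.trans (le_iSup (fun x : X => limsup (fun n : ℕ =>
      (((n : ℝ)⁻¹ * Real.log (φ n x) : ℝ) : EReal)) atTop) x)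
  · refine limsup_le_limsup ?_
    filter_upwards [eventually_ge_atTop 1] with n hn
    obtain ⟨z, hz, hzle⟩ := hmax n hn
    refine le_trans (EReal.coe_le_coe_iff.2 ?_) hzle
    exact mul_le_mul_of_nonneg_left (hz x) (by positivity)
end
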